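/- arXiv:2503.17558 — 3 statements merged into one kernel-verified Lean document; each statement's English description precedes it below -/
import Mathlib

section
/- Let σ > 0 and let P, D be reals with 0 ≤ P ≤ σ², 0 < D ≤ 2σ², and √P < σ − √|σ² − D|. Set θ := σ² + (σ − √P)² − D, η² := σ²·(4σ²(σ − √P)²/θ² − 1), and c := (σ − √P)/√(σ² + η²). Then: (i) θ > 0; (ii) η² > 0; (iii) c = θ/(2σ²); (iv) (1 − c)²σ² + c²η² = D; (v) c²(σ² + η²) = (σ − √P)²; and (vi) 1 + σ²/η² = σ²(σ − √P)² / (σ²(σ − √P)² − θ²/4), so that (1/2)·log(1 + σ²/η²) = (1/2)·log( σ²(σ − √P)² / ( σ²(σ − √P)² − (1/4)(σ² + (σ − √P)² − D)² ) ). -/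
/-- Parameter identities for the Gaussian RDP achievability proof in the
regime `√P < σ - √|σ² - D|`. -/
theorem gaussian_rdp_parameters
    (σ P D θ η2 c : ℝ)
    (hσ : 0 < σ)
    (hP0 : 0 ≤ P) (hPσ : P ≤ σ ^ 2)
    (hD0 : 0 < D) (hD2 : D ≤ 2 * σ ^ 2)
    (hreg : Real.sqrt P < σ - Real.sqrt |σ ^ 2 - D|)
    (hθ : θ = σ ^ 2 + (σ - Real.sqrt P) ^ 2 - D)
    (hη2 : η2 = σ ^ 2 * (4 * σ ^ 2 * (σ - Real.sqrt P) ^ 2 / θ ^ 2 - 1))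
    (hc : c = (σ - Real.sqrt P) / Real.sqrt (σ ^ 2 + η2)) :
    0 < θ ∧
    0 < η2 ∧
    c = θ / (2 * σ ^ 2) ∧
    (1 - c) ^ 2 * σ ^ 2 + c ^ 2 * η2 = D ∧
    c ^ 2 * (σ ^ 2 + η2) = (σ - Real.sqrt P) ^ 2 ∧
    1 + σ ^ 2 / η2
      = σ ^ 2 * (σ - Real.sqrt P) ^ 2 / (σ ^ 2 * (σ - Real.sqrt P) ^ 2 - θ ^ 2 / 4) ∧
    (1 / 2) * Real.log (1 + σ ^ 2 / η2)
      = (1 / 2) * Real.log (σ ^ 2 * (σ - Real.sqrt P) ^ 2 /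
          (σ ^ 2 * (σ - Real.sqrt P) ^ 2
            - (1 / 4) * (σ ^ 2 + (σ - Real.sqrt P) ^ 2 - D) ^ 2)) := by
  have hp := Real.sqrt_nonneg P
  have ht := Real.sqrt_nonneg |σ ^ 2 - D|
  have ht2 := Real.sq_sqrt (abs_nonneg (σ ^ 2 - D))
  have ha1 := le_abs_self (σ ^ 2 - D)
  have ha2 := neg_abs_le (σ ^ 2 - D)
  rw [← hθ]
  generalize Real.sqrt P = p at *
  generalize Real.sqrt |σ ^ 2 - D| = t at *
  obtain ⟨s, hs⟩ : ∃ s, s = σ - p := ⟨_, rfl⟩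
  rw [← hs] at hθ hη2 hc ⊢
  have hst : t < s := by linarith
  have hs0 : 0 < s := by linarith
  have hts : t ^ 2 < s ^ 2 := by nlinarith
  have hθ0 : 0 < θ := by linarith
  have hpD : (σ - s) ^ 2 < D := by
    have h1 : σ - s < σ - t := by linarith
    have h2 : 0 ≤ σ - s := by linarith
    have h3 : (σ - s) ^ 2 < (σ - t) ^ 2 := by nlinarith
    have h4 : (σ - t) ^ 2 ≤ σ ^ 2 - t ^ 2 := by nlinarith
    linarith
  have hlt : θ < 2 * σ * s := by nlinarith
  have hsq : θ ^ 2 < 4 * σ ^ 2 * s ^ 2 := by nlinarith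
  have hη0 : 0 < η2 := by
    rw [hη2]
    have : 1 < 4 * σ ^ 2 * s ^ 2 / θ ^ 2 := by
      rw [lt_div_iff₀ (by positivity)]; linarith
    have h2 : 0 < σ ^ 2 := by positivity
    exact mul_pos h2 (by linarith)
  have hsum : σ ^ 2 + η2 = (2 * σ ^ 2 * s / θ) ^ 2 := by
    rw [hη2]; field_simp; ring
  have hcc : c = θ / (2 * σ ^ 2) := by
    rw [hc, hsum, Real.sqrt_sq (by positivity)]; field_simp
  have h5 : c ^ 2 * (σ ^ 2 + η2) = s ^ 2 := by
    rw [hcc, hsum]; field_simp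
  have hcθ : 2 * σ ^ 2 * c = θ := by
    rw [hcc]; field_simp
  have hden : 0 < σ ^ 2 * s ^ 2 - θ ^ 2 / 4 := by linarith
  have hηθ : η2 * θ ^ 2 = σ ^ 2 * (4 * σ ^ 2 * s ^ 2 - θ ^ 2) := by
    rw [hη2]; field_simp
  have h6 : 1 + σ ^ 2 / η2 = σ ^ 2 * s ^ 2 / (σ ^ 2 * s ^ 2 - θ ^ 2 / 4) := by
    rw [eq_div_iff hden.ne']
    field_simp
    linear_combination (-1 : ℝ) * hηθ
  refine ⟨hθ0, hη0, hcc, by linarith, h5, h6, ?_⟩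
  rw [h6]
  congr 4
  ring
end

section
/- Let n ≥ 1, σ > 0, and 0 ≤ τ ≤ σ. Let ν be a probability measure on ℝⁿ with finite Kullback–Leibler divergence KL(ν ‖ γ_τ⁽ⁿ⁾). Then there exists a coupling π of γ_σ⁽ⁿ⁾ and ν such that (∫ ‖x − y‖² dπ(x, y))^{1/2} ≤ √n·(σ − τ) + √(2σ²·KL(ν ‖ γ_τ⁽ⁿ⁾)). -/
open MeasureTheory ProbabilityTheory
open scoped ENNReal NNReal

/-- The Kullback–Leibler divergence `∫ log(dμ/dν) dμ` (natural logarithm), equal to `∞`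
when `μ` is not absolutely continuous w.r.t. `ν` or the log-likelihood ratio is not
integrable. -/
noncomputable def klDiv {α : Type*} [MeasurableSpace α] (μ ν : Measure α) : ℝ≥0∞ := by
  classical
  exact if μ ≪ ν ∧ Integrable (llr μ ν) μ then ENNReal.ofReal (∫ x, llr μ ν x ∂μ) else ⊤

/-- The centered Gaussian measure on `ℝⁿ` (as `EuclideanSpace ℝ (Fin n)`) with
covariance `σ² · Iₙ`, i.e. the `n`-fold product of `N(0, σ²)`. -/
noncomputable def gaussianE (n : ℕ) (σ : ℝ) : Measure (EuclideanSpace ℝ (Fin n)) :=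
  (Measure.pi fun _ : Fin n => gaussianReal 0 (σ ^ 2).toNNReal).map
    (MeasurableEquiv.toLp 2 (Fin n → ℝ))

/-! ### One-dimensional facts on distribution functions -/

lemma ctal_cdf_continuous (μ : Measure ℝ) [IsProbabilityMeasure μ] (hμ : μ ≪ volume) :
    Continuous (cdf μ) := by
  rw [continuous_iff_continuousAt]
  intro x
  rw [(monotone_cdf μ).continuousAt_iff_leftLim_eq_rightLim, StieltjesFunction.rightLim_eq]
  have h := StieltjesFunction.measure_singleton (cdf μ) x
  rw [measure_cdf, hμ (by simp)] at h
  have h1 := ENNReal.ofReal_eq_zero.1 h.symm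
  have h2 := (monotone_cdf μ).leftLim_le le_rfl (x := x)
  linarith

lemma ctal_exists_cdf_eq (μ : Measure ℝ) [IsProbabilityMeasure μ] (hμ : μ ≪ volume)
    {p : ℝ} (h0 : 0 < p) (h1 : p < 1) : ∃ b, cdf μ b = p := by
  refine mem_range_of_exists_le_of_exists_ge (ctal_cdf_continuous μ hμ) ?_ ?_
  · exact (((tendsto_cdf_atBot μ).eventually (gt_mem_nhds h0)).exists).imp fun _ h => h.le
  · exact (((tendsto_cdf_atTop μ).eventually (lt_mem_nhds h1)).exists).imp fun _ h => h.le

/-- Probability integral transform. -/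
lemma ctal_measure_cdf_le (μ : Measure ℝ) [IsProbabilityMeasure μ] (hμ : μ ≪ volume)
    {p : ℝ} (h0 : 0 < p) (h1 : p < 1) : μ {x | cdf μ x ≤ p} = ENNReal.ofReal p := by
  apply le_antisymm
  · refine le_of_forall_gt_imp_ge_of_dense fun c hc => ?_
    by_cases hc1 : 1 ≤ c
    · exact prob_le_one.trans hc1
    push Not at hc1
    have hct : c ≠ ⊤ := (hc1.trans ENNReal.one_lt_top).ne
    have hpc : p < c.toReal := (ENNReal.ofReal_lt_iff_lt_toReal h0.le hct).1 hc
    have hc1' : c.toReal < 1 := by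
      rw [← ENNReal.toReal_one]; exact (ENNReal.toReal_lt_toReal hct ENNReal.one_ne_top).2 hc1
    obtain ⟨b, hb⟩ := ctal_exists_cdf_eq μ hμ (h0.trans hpc) hc1'
    calc μ {x | cdf μ x ≤ p} ≤ μ (Set.Iic b) := by
          apply measure_mono
          intro x hx
          by_contra hxb
          have := monotone_cdf μ (not_le.1 hxb).le
          simp only [Set.mem_ofPred_eq] at hx
          linarith
      _ = c := by rw [← ofReal_cdf, hb, ENNReal.ofReal_toReal hct]
  · obtain ⟨b, hb⟩ := ctal_exists_cdf_eq μ hμ h0 h1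
    rw [← hb, ofReal_cdf]
    exact measure_mono fun x hx => monotone_cdf μ hx

lemma ctal_ae_cdf_pos (μ : Measure ℝ) [IsProbabilityMeasure μ] (hμ : μ ≪ volume) :
    ∀ᵐ x ∂μ, 0 < cdf μ x := by
  have : μ {x | cdf μ x ≤ 0} = 0 := by
    refine le_antisymm (le_of_forall_gt_imp_ge_of_dense fun c hc => ?_) zero_le
    by_cases hc1 : 1 ≤ c
    · exact prob_le_one.trans hc1
    push Not at hc1
    have hct : c ≠ ⊤ := (hc1.trans ENNReal.one_lt_top).ne
    have hc1' : c.toReal < 1 := by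
      rw [← ENNReal.toReal_one]; exact (ENNReal.toReal_lt_toReal hct ENNReal.one_ne_top).2 hc1
    have h0 : 0 < c.toReal := ENNReal.toReal_pos hc.ne' hct
    calc _ ≤ μ {x | cdf μ x ≤ c.toReal} := measure_mono fun x hx => le_trans hx h0.le
      _ = c := by rw [ctal_measure_cdf_le μ hμ h0 hc1', ENNReal.ofReal_toReal hct]
  simpa [ae_iff] using this

lemma ctal_ae_cdf_lt_one (μ : Measure ℝ) [IsProbabilityMeasure μ] (hμ : μ ≪ volume) :
    ∀ᵐ x ∂μ, cdf μ x < 1 := by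
  have hm : MeasurableSet {x | cdf μ x < 1} :=
    measurableSet_lt (monotone_cdf μ).measurable measurable_const
  apply (mem_ae_iff_prob_eq_one hm).2
  refine le_antisymm prob_le_one (le_of_forall_lt_imp_le_of_dense fun c hc => ?_)
  by_cases hc0 : c = 0
  · simp [hc0]
  have hct : c ≠ ⊤ := (hc.trans ENNReal.one_lt_top).ne
  have hc1' : c.toReal < 1 := by
    rw [← ENNReal.toReal_one]; exact (ENNReal.toReal_lt_toReal hct ENNReal.one_ne_top).2 hc
  have h0 : 0 < c.toReal := ENNReal.toReal_pos hc0 hct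
  calc c = μ {x | cdf μ x ≤ c.toReal} := by
        rw [ctal_measure_cdf_le μ hμ h0 hc1', ENNReal.ofReal_toReal hct]
    _ ≤ _ := measure_mono fun x hx => lt_of_le_of_lt hx hc1'

/-! ### The Gaussian distribution function -/

lemma ctal_gauss_ac : gaussianReal 0 1 ≪ volume := gaussianReal_absolutelyContinuous 0 one_ne_zero

lemma ctal_gauss_cdf_strictMono : StrictMono (cdf (gaussianReal 0 1)) := by
  intro a b hab
  have h : 0 < gaussianReal 0 1 (Set.Ioc a b) := by
    rw [pos_iff_ne_zero]
    intro h
    have := gaussianReal_absolutelyContinuous' 0 (v := 1) one_ne_zero h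
    simp at this
    linarith
  have h2 := StieltjesFunction.measure_Ioc (cdf (gaussianReal 0 1)) a b
  rw [measure_cdf] at h2
  rw [h2, ENNReal.ofReal_pos] at h
  linarith

lemma ctal_gauss_cdf_pos (x : ℝ) : 0 < cdf (gaussianReal 0 1) x :=
  lt_of_le_of_lt (cdf_nonneg _ (x - 1)) (ctal_gauss_cdf_strictMono (by linarith))

lemma ctal_gauss_cdf_lt_one (x : ℝ) : cdf (gaussianReal 0 1) x < 1 :=
  lt_of_lt_of_le (ctal_gauss_cdf_strictMono (by linarith : x < x + 1)) (cdf_le_one _ _)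

lemma ctal_exists_quantile : ∃ q : ℝ → ℝ, Measurable q ∧ ∀ y, q (cdf (gaussianReal 0 1) y) = y := by
  have he := (ctal_cdf_continuous _ ctal_gauss_ac).measurableEmbedding
    ctal_gauss_cdf_strictMono.injective
  obtain ⟨q, hq, h⟩ := he.exists_measurable_extend measurable_id (fun _ => inferInstance)
  exact ⟨q, hq, fun y => congrFun h y⟩

/-- A measurable quantile function of the standard Gaussian. -/
noncomputable def ctalQ : ℝ → ℝ := ctal_exists_quantile.choose

lemma ctalQ_measurable : Measurable ctalQ := ctal_exists_quantile.choose_spec.1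

lemma ctalQ_cdf (y : ℝ) : ctalQ (cdf (gaussianReal 0 1) y) = y :=
  ctal_exists_quantile.choose_spec.2 y

lemma cdf_ctalQ {p : ℝ} (h0 : 0 < p) (h1 : p < 1) : cdf (gaussianReal 0 1) (ctalQ p) = p := by
  obtain ⟨y, rfl⟩ := ctal_exists_cdf_eq _ ctal_gauss_ac h0 h1
  rw [ctalQ_cdf]

/-- The monotone transport of `μ` to the standard Gaussian. -/
noncomputable def ctalS (μ : Measure ℝ) (x : ℝ) : ℝ := ctalQ (cdf μ x)

lemma ctalS_measurable (μ : Measure ℝ) : Measurable (ctalS μ) :=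
  ctalQ_measurable.comp (monotone_cdf μ).measurable

lemma ctalS_map (μ : Measure ℝ) [IsProbabilityMeasure μ] (hμ : μ ≪ volume) :
    μ.map (ctalS μ) = gaussianReal 0 1 := by
  have : IsProbabilityMeasure (μ.map (ctalS μ)) :=
    Measure.isProbabilityMeasure_map (ctalS_measurable μ).aemeasurable
  apply Measure.ext_of_Iic
  intro y
  rw [Measure.map_apply (ctalS_measurable μ) measurableSet_Iic, ← ofReal_cdf,
    ← ctal_measure_cdf_le μ hμ (ctal_gauss_cdf_pos y) (ctal_gauss_cdf_lt_one y)]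
  apply measure_congr
  filter_upwards [ctal_ae_cdf_pos μ hμ, ctal_ae_cdf_lt_one μ hμ] with x h0 h1
  apply propext
  change ctalS μ x ≤ y ↔ cdf μ x ≤ cdf (gaussianReal 0 1) y
  rw [← ctal_gauss_cdf_strictMono.le_iff_le, ctalS, cdf_ctalQ h0 h1]

lemma ctal_gauss_tail (s : ℝ) :
    ∫ y in Set.Ioi s, y ∂(gaussianReal 0 1) = gaussianPDFReal 0 1 s := by
  have hint : Integrable (fun y : ℝ => gaussianPDFReal 0 1 y * y) := by
    have h := (memLp_id_gaussianReal' (μ := 0) (v := 1) 1 (by simp)).integrable le_rfl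
    rw [gaussianReal_of_var_ne_zero _ one_ne_zero, integrable_withDensity_iff_integrable_smul'
      (measurable_gaussianPDF _ _) (by simp [gaussianPDF_lt_top])] at h
    simpa using h
  rw [← integral_indicator measurableSet_Ioi, integral_gaussianReal_eq_integral_smul one_ne_zero]
  have : (fun x : ℝ => gaussianPDFReal 0 1 x • (Set.Ioi s).indicator (fun y => y) x)
      = (Set.Ioi s).indicator (fun y => gaussianPDFReal 0 1 y * y) := by
    ext x
    by_cases hx : x ∈ Set.Ioi s <;> simp [hx]
  rw [this, integral_indicator measurableSet_Ioi]
  have hd : ∀ x : ℝ, HasDerivAt (fun y => -gaussianPDFReal 0 1 y) (gaussianPDFReal 0 1 x * x) x := by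
    intro x
    simp only [gaussianPDFReal_def]
    have h1 : HasDerivAt (fun y : ℝ => -(y - 0) ^ 2 / (2 * ((1 : ℝ≥0) : ℝ))) (-x) x := by
      have := ((((hasDerivAt_id x).sub_const 0).pow 2).neg).div_const (2 * ((1 : ℝ≥0) : ℝ))
      exact this.congr_deriv (by simp; ring)
    have h2 := ((h1.exp).const_mul ((√(2 * Real.pi * ((1 : ℝ≥0) : ℝ)))⁻¹)).neg
    exact h2.congr_deriv (by ring)
  have ht : Filter.Tendsto (fun y => -gaussianPDFReal 0 1 y) Filter.atTop (nhds 0) := by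
    rw [← neg_zero]
    apply Filter.Tendsto.neg
    simp only [gaussianPDFReal_def]
    rw [← mul_zero ((√(2 * Real.pi * ((1 : ℝ≥0) : ℝ)))⁻¹)]
    apply Filter.Tendsto.const_mul
    apply Real.tendsto_exp_atBot.comp
    have h3 : Filter.Tendsto (fun y : ℝ => y ^ 2 / 2) Filter.atTop Filter.atTop :=
      (Filter.tendsto_pow_atTop two_ne_zero).atTop_div_const (by norm_num)
    have := Filter.tendsto_neg_atTop_atBot.comp h3
    refine this.congr fun y => ?_
    simp
    ring
  have := integral_Ioi_of_hasDerivAt_of_tendsto (a := s) (hd s).continuousAt.continuousWithinAt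
    (fun x _ => hd x) hint.integrableOn ht
  rw [this]; ring

/-! ### The key one-dimensional inequality -/

lemma ctalS_memLp (μ : Measure ℝ) [IsProbabilityMeasure μ] (hμ : μ ≪ volume) :
    MemLp (ctalS μ) 2 μ := by
  have h := memLp_id_gaussianReal' (μ := 0) (v := 1) 2 (by simp)
  rw [← ctalS_map μ hμ, memLp_map_measure_iff aestronglyMeasurable_id
    (ctalS_measurable μ).aemeasurable] at h
  exact h

lemma ctalS_integral (μ : Measure ℝ) [IsProbabilityMeasure μ] (hμ : μ ≪ volume) :
    ∫ x, ctalS μ x ∂μ = 0 := by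
  have h := integral_id_gaussianReal (μ := 0) (v := 1)
  rw [← ctalS_map μ hμ, integral_map (ctalS_measurable μ).aemeasurable
    (by fun_prop)] at h
  exact h

lemma ctalS_sq_integral (μ : Measure ℝ) [IsProbabilityMeasure μ] (hμ : μ ≪ volume) :
    ∫ x, ctalS μ x ^ 2 ∂μ = 1 := by
  have h := variance_fun_id_gaussianReal (μ := 0) (v := 1)
  rw [variance_eq_integral measurable_id'.aemeasurable] at h
  simp only [integral_id_gaussianReal, sub_zero] at h
  rw [← ctalS_map μ hμ, integral_map (ctalS_measurable μ).aemeasurable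
    (by fun_prop)] at h
  simpa using h

/-- The tail integral of the transport. -/
noncomputable def ctalR (μ : Measure ℝ) (x : ℝ) : ℝ := ∫ z in Set.Ioi x, ctalS μ z ∂μ

lemma ctalR_eq (μ : Measure ℝ) [IsProbabilityMeasure μ] (hμ : μ ≪ volume) (x : ℝ)
    (h0 : 0 < cdf μ x) (h1 : cdf μ x < 1) :
    ctalR μ x = gaussianPDFReal 0 1 (ctalS μ x) := by
  rw [← ctal_gauss_tail, ← ctalS_map μ hμ, setIntegral_map measurableSet_Ioi
    (by fun_prop) (ctalS_measurable μ).aemeasurable, ctalR]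
  apply setIntegral_congr_set
  have hnull : ∀ᵐ z ∂μ, ctalS μ z ≠ ctalS μ x := by
    have h := ctal_gauss_ac (Real.volume_singleton (a := ctalS μ x))
    rw [← ctalS_map μ hμ, Measure.map_apply (ctalS_measurable μ) (measurableSet_singleton _)] at h
    rw [ae_iff]
    convert h using 2
    ext z
    simp
  filter_upwards [ctal_ae_cdf_pos μ hμ, ctal_ae_cdf_lt_one μ hμ, hnull] with z hz0 hz1 hz
  apply propext
  change x < z ↔ ctalS μ x < ctalS μ z
  constructor
  · intro hxz
    refine lt_of_le_of_ne ?_ hz.symm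
    rw [← ctal_gauss_cdf_strictMono.le_iff_le, ctalS, ctalS, cdf_ctalQ h0 h1, cdf_ctalQ hz0 hz1]
    exact monotone_cdf μ hxz.le
  · intro h
    by_contra hxz
    have := monotone_cdf μ (not_lt.1 hxz)
    rw [← ctal_gauss_cdf_strictMono.lt_iff_lt, ctalS, ctalS, cdf_ctalQ h0 h1,
      cdf_ctalQ hz0 hz1] at h
    linarith

lemma ctalR_nonneg (μ : Measure ℝ) [IsProbabilityMeasure μ] (hμ : μ ≪ volume) (x : ℝ) :
    0 ≤ ctalR μ x := by
  by_cases h0 : 0 < cdf μ x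
  · by_cases h1 : cdf μ x < 1
    · rw [ctalR_eq μ hμ x h0 h1]
      exact gaussianPDFReal_nonneg _ _ _
    · have : μ (Set.Ioi x) = 0 := by
        have h2 : μ (Set.Iic x) = 1 := by
          rw [← ofReal_cdf, le_antisymm (cdf_le_one μ x) (not_lt.1 h1)]; simp
        rw [← Set.compl_Iic]
        exact (prob_compl_eq_zero_iff measurableSet_Iic).2 h2
      rw [ctalR, Measure.restrict_eq_zero.2 this]; simp
  · have : μ (Set.Iic x) = 0 := by
      rw [← ofReal_cdf, le_antisymm (not_lt.1 h0) (cdf_nonneg μ x)]; simp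
    have h2 : (Set.Ioi x : Set ℝ) =ᵐ[μ] Set.univ := by
      rw [ae_eq_univ]; simpa using this
    rw [ctalR, setIntegral_congr_set h2, setIntegral_univ, ctalS_integral μ hμ]

/-- Layer-cake kernel. -/
noncomputable def ctalK (x z : ℝ) : ℝ :=
  (if x < z then 1 else 0) - (if x < 0 then 1 else 0)

lemma ctalK_eq (z : ℝ) : (fun x => ctalK x z)
    = fun x => (Set.Ico 0 z).indicator 1 x - (Set.Ico z 0).indicator (1 : ℝ → ℝ) x := by
  ext x
  simp only [ctalK, Set.indicator, Set.mem_Ico, Pi.one_apply]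
  split_ifs <;> first | rfl | (exfalso; grind) | norm_num

lemma ctalK_abs_eq (z : ℝ) : (fun x => ‖ctalK x z‖)
    = fun x => (Set.Ico 0 z).indicator 1 x + (Set.Ico z 0).indicator (1 : ℝ → ℝ) x := by
  ext x
  simp only [ctalK, Set.indicator, Set.mem_Ico, Pi.one_apply]
  split_ifs <;> first | (exfalso; grind) | norm_num

lemma ctal_int_ind (a b : ℝ) : Integrable ((Set.Ico a b).indicator (1 : ℝ → ℝ)) := by
  rw [integrable_indicator_iff measurableSet_Ico]
  exact integrableOn_const (by simp)

lemma ctalK_integral (z : ℝ) : ∫ x, ctalK x z = z := by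
  rw [ctalK_eq, integral_sub (ctal_int_ind _ _) (ctal_int_ind _ _)]
  rw [integral_indicator_one measurableSet_Ico, integral_indicator_one measurableSet_Ico]
  simp

lemma ctalK_abs_integral (z : ℝ) : ∫ x, ‖ctalK x z‖ = |z| := by
  rw [ctalK_abs_eq, integral_add (ctal_int_ind _ _) (ctal_int_ind _ _)]
  rw [integral_indicator_one measurableSet_Ico, integral_indicator_one measurableSet_Ico]
  simp

lemma ctalK_integrable (z : ℝ) : Integrable (fun x => ctalK x z) := by
  rw [ctalK_eq]
  exact (ctal_int_ind _ _).sub (ctal_int_ind _ _)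

lemma ctalK_measurable : Measurable (fun p : ℝ × ℝ => ctalK p.1 p.2) := by
  unfold ctalK
  refine Measurable.sub ?_ ?_
  · exact Measurable.ite (measurableSet_lt measurable_fst measurable_snd) measurable_const
      measurable_const
  · exact Measurable.ite (measurableSet_lt measurable_fst measurable_const) measurable_const
      measurable_const

lemma ctal_xS_integrable (μ : Measure ℝ) [IsProbabilityMeasure μ] (hμ : μ ≪ volume)
    (h2 : MemLp id 2 μ) : Integrable (fun x => x * ctalS μ x) μ :=
  MemLp.integrable_mul h2 (ctalS_memLp μ hμ)

lemma ctalKS_integrable (μ : Measure ℝ) [IsProbabilityMeasure μ] (hμ : μ ≪ volume)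
    (h2 : MemLp id 2 μ) :
    Integrable (Function.uncurry fun x z => ctalK x z * ctalS μ z) (volume.prod μ) := by
  have hm : Measurable (Function.uncurry fun x z => ctalK x z * ctalS μ z) :=
    ctalK_measurable.mul ((ctalS_measurable μ).comp measurable_snd)
  rw [integrable_prod_iff' hm.aestronglyMeasurable]
  constructor
  · filter_upwards with z
    exact (ctalK_integrable z).mul_const (ctalS μ z)
  · simp only [Function.uncurry_apply_pair, norm_mul, integral_mul_const, ctalK_abs_integral]
    have := (ctal_xS_integrable μ hμ h2).norm
    simpa using this

lemma ctalR_eq_K (μ : Measure ℝ) [IsProbabilityMeasure μ] (hμ : μ ≪ volume) (x : ℝ) :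
    ∫ z, ctalK x z * ctalS μ z ∂μ = ctalR μ x := by
  have hi := (ctalS_memLp μ hμ).integrable one_le_two
  have : (fun z => ctalK x z * ctalS μ z) = fun z =>
      (Set.Ioi x).indicator (ctalS μ) z - (if x < 0 then 1 else 0) * ctalS μ z := by
    ext z
    by_cases hz : x < z <;> simp [ctalK, Set.indicator, hz, sub_mul]
  rw [this, integral_sub (hi.indicator measurableSet_Ioi) (hi.const_mul _), integral_const_mul,
    ctalS_integral μ hμ, integral_indicator measurableSet_Ioi, ctalR]
  simp

lemma ctal_key (μ : Measure ℝ) [IsProbabilityMeasure μ] (hμ : μ ≪ volume)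
    (h2 : MemLp id 2 μ) :
    0 ≤ ∫ x, x * ctalS μ x ∂μ ∧
    ∫⁻ x in {x | 0 < cdf μ x ∧ cdf μ x < 1}, ENNReal.ofReal (gaussianPDFReal 0 1 (ctalS μ x))
      ≤ ENNReal.ofReal (∫ x, x * ctalS μ x ∂μ) := by
  have hI := ctalKS_integrable μ hμ h2
  have hsw := integral_integral_swap hI
  simp only [ctalR_eq_K μ hμ, integral_mul_const, ctalK_integral] at hsw
  have hRi : Integrable (ctalR μ) := by
    have := hI.integral_prod_left
    simpa only [Function.uncurry_apply_pair, ctalR_eq_K μ hμ] using this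
  rw [← hsw]
  refine ⟨integral_nonneg (ctalR_nonneg μ hμ), ?_⟩
  rw [ofReal_integral_eq_lintegral_ofReal hRi (Filter.Eventually.of_forall (ctalR_nonneg μ hμ))]
  have hms : MeasurableSet {x | 0 < cdf μ x ∧ cdf μ x < 1} :=
    (measurableSet_lt measurable_const (monotone_cdf μ).measurable).inter
      (measurableSet_lt (monotone_cdf μ).measurable measurable_const)
  calc _ = ∫⁻ x in {x | 0 < cdf μ x ∧ cdf μ x < 1}, ENNReal.ofReal (ctalR μ x) := by
        refine setLIntegral_congr_fun hms fun x hx => ?_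
        simp only [ctalR_eq μ hμ x hx.1 hx.2]
    _ ≤ _ := setLIntegral_le_lintegral _ _

/-! ### Change of measure -/

lemma ctal_gibbs {α : Type*} [MeasurableSpace α] (μ ν : Measure α) [IsProbabilityMeasure μ]
    [IsProbabilityMeasure ν] (h : μ ≪ ν) {g : α → ℝ≥0∞} (hg : Measurable g) :
    ∫⁻ x, g x * ENNReal.ofReal (Real.exp (-llr μ ν x)) ∂μ ≤ ∫⁻ x, g x ∂ν := by
  calc ∫⁻ x, g x * ENNReal.ofReal (Real.exp (-llr μ ν x)) ∂μ
      = ∫⁻ x, (ν.rnDeriv μ * g) x ∂μ := by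
        apply lintegral_congr_ae
        filter_upwards [exp_neg_llr h, ν.rnDeriv_lt_top μ] with x hx hx2
        rw [hx, ENNReal.ofReal_toReal hx2.ne, Pi.mul_apply, mul_comm]
    _ = ∫⁻ x, g x ∂(μ.withDensity (ν.rnDeriv μ)) :=
        (lintegral_withDensity_eq_lintegral_mul _ (Measure.measurable_rnDeriv _ _) hg).symm
    _ ≤ ∫⁻ x, g x ∂ν := lintegral_mono' (Measure.withDensity_rnDeriv_le _ _) le_rfl

lemma ctal_gauss_lintegral {g : ℝ → ℝ≥0∞} (hg : Measurable g) :
    ∫⁻ x, g x ∂(gaussianReal 0 1) = ∫⁻ x, ENNReal.ofReal (gaussianPDFReal 0 1 x) * g x := by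
  rw [gaussianReal_of_var_ne_zero _ one_ne_zero,
    lintegral_withDensity_eq_lintegral_mul _ (measurable_gaussianPDF _ _) hg]
  rfl

lemma ctal_gauss_exp_lt_top :
    ∫⁻ x, ENNReal.ofReal (Real.exp (x ^ 2 / 4)) ∂(gaussianReal 0 1) < ⊤ := by
  rw [ctal_gauss_lintegral (by fun_prop)]
  have hi : Integrable (fun x : ℝ => (√(2 * Real.pi * ((1 : ℝ≥0) : ℝ)))⁻¹
      * Real.exp (-(1 / 4) * x ^ 2)) :=
    (integrable_exp_neg_mul_sq (by norm_num)).const_mul _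
  refine lt_of_le_of_lt (le_of_eq ?_) hi.lintegral_lt_top
  refine lintegral_congr fun x => ?_
  rw [← ENNReal.ofReal_mul (gaussianPDFReal_nonneg _ _ _), gaussianPDFReal, mul_assoc,
    ← Real.exp_add]
  congr 3
  simp
  ring

/-! ### The conditional transport -/

section cond

variable {A : Type*} [MeasurableSpace A]

lemma ctal_cdf_kernel_measurable (κ : Kernel A ℝ) [IsMarkovKernel κ] :
    Measurable (fun p : A × ℝ => cdf (κ p.1) p.2) := by
  simp only [cdf_eq_real, measureReal_def]
  apply Measurable.ennreal_toReal
  have hs : MeasurableSet {q : (A × ℝ) × ℝ | q.2 ≤ q.1.2} :=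
    measurableSet_le measurable_snd (measurable_snd.comp measurable_fst)
  exact Kernel.measurable_kernel_prodMk_left (κ := κ.comap Prod.fst measurable_fst) hs

lemma ctal_S_kernel_measurable (κ : Kernel A ℝ) [IsMarkovKernel κ] :
    Measurable (fun p : A × ℝ => ctalS (κ p.1) p.2) :=
  ctalQ_measurable.comp (ctal_cdf_kernel_measurable κ)

lemma ctal_cond (ν₁ : Measure A) [IsProbabilityMeasure ν₁] (κ : Kernel A ℝ) [IsMarkovKernel κ]
    (hac : ν₁ ⊗ₘ κ ≪ ν₁ ⊗ₘ Kernel.const A (gaussianReal 0 1))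
    (hint : Integrable (llr (ν₁ ⊗ₘ κ) (ν₁ ⊗ₘ Kernel.const A (gaussianReal 0 1))) (ν₁ ⊗ₘ κ)) :
    (∀ᵐ a ∂ν₁, (κ a).map (ctalS (κ a)) = gaussianReal 0 1) ∧
    ∫⁻ p, ENNReal.ofReal ((p.2 - ctalS (κ p.1) p.2) ^ 2) ∂(ν₁ ⊗ₘ κ)
      ≤ ENNReal.ofReal (2 *
        ∫ p, llr (ν₁ ⊗ₘ κ) (ν₁ ⊗ₘ Kernel.const A (gaussianReal 0 1)) p ∂(ν₁ ⊗ₘ κ)) := by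
  set ν := ν₁ ⊗ₘ κ with hν
  set η := ν₁ ⊗ₘ Kernel.const A (gaussianReal 0 1) with hη
  set L := llr ν η with hL
  have hLm : Measurable L := measurable_llr _ _
  have hSm := ctal_S_kernel_measurable κ
  have hFm := ctal_cdf_kernel_measurable κ
  have hac1 : ∀ᵐ a ∂ν₁, κ a ≪ volume := by
    filter_upwards [Measure.absolutelyContinuous_compProd_right_iff.1 hac] with a ha
    exact ha.trans (by simpa using ctal_gauss_ac)
  have hmap : ∀ᵐ a ∂ν₁, (κ a).map (ctalS (κ a)) = gaussianReal 0 1 := by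
    filter_upwards [hac1] with a ha using ctalS_map _ ha
  refine ⟨hmap, ?_⟩
  -- second moment
  have hx2 : Integrable (fun p : A × ℝ => p.2 ^ 2) ν := by
    have h1 := ctal_gibbs ν η hac (g := fun p : A × ℝ => ENNReal.ofReal (Real.exp (p.2 ^ 2 / 4)))
      (by fun_prop)
    have h2 : ∫⁻ p, ENNReal.ofReal (Real.exp (p.2 ^ 2 / 4)) ∂η < ⊤ := by
      rw [hη, Measure.lintegral_compProd (by fun_prop)]
      simpa using ctal_gauss_exp_lt_top
    have h3 : Integrable (fun p : A × ℝ => Real.exp (p.2 ^ 2 / 4 - L p)) ν := by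
      refine ⟨by fun_prop, ?_⟩
      rw [hasFiniteIntegral_iff_ofReal (Filter.Eventually.of_forall fun _ => (Real.exp_pos _).le)]
      refine lt_of_le_of_lt (le_of_eq ?_) (h1.trans_lt h2)
      refine lintegral_congr fun p => ?_
      rw [← ENNReal.ofReal_mul (Real.exp_pos _).le, ← Real.exp_add, sub_eq_add_neg]
    have h4 : Integrable (fun p : A × ℝ => 4 * (L p + Real.exp (p.2 ^ 2 / 4 - L p))) ν :=
      (hint.add h3).const_mul 4
    refine h4.mono' (by fun_prop) (Filter.Eventually.of_forall fun p => ?_)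
    rw [Real.norm_of_nonneg (sq_nonneg _)]
    have := Real.add_one_le_exp (p.2 ^ 2 / 4 - L p)
    linarith
  have hx2a : ∀ᵐ a ∂ν₁, MemLp id 2 (κ a) := by
    filter_upwards [((Measure.integrable_compProd_iff hx2.1).1 hx2).1] with a ha
    exact (memLp_two_iff_integrable_sq aestronglyMeasurable_id).2 ha
  have hS2 : ∫⁻ p, ENNReal.ofReal (ctalS (κ p.1) p.2 ^ 2) ∂ν = 1 := by
    rw [hν, Measure.lintegral_compProd (by fun_prop)]
    calc _ = ∫⁻ a, 1 ∂ν₁ := by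
          apply lintegral_congr_ae
          filter_upwards [hac1] with a ha
          rw [← ofReal_integral_eq_lintegral_ofReal (ctalS_memLp _ ha).integrable_sq
            (Filter.Eventually.of_forall fun _ => sq_nonneg _), ctalS_sq_integral _ ha]
          simp
      _ = 1 := by simp
  have hS2i : Integrable (fun p : A × ℝ => ctalS (κ p.1) p.2 ^ 2) ν := by
    refine ⟨(hSm.pow_const 2).aestronglyMeasurable, ?_⟩
    rw [hasFiniteIntegral_iff_ofReal (Filter.Eventually.of_forall fun _ => sq_nonneg _), hS2]
    simp
  have hS2I : ∫ p, ctalS (κ p.1) p.2 ^ 2 ∂ν = 1 := by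
    rw [integral_eq_lintegral_of_nonneg_ae (Filter.Eventually.of_forall fun _ => sq_nonneg _)
      (hSm.pow_const 2).aestronglyMeasurable, hS2]
    simp
  have hxS : Integrable (fun p : A × ℝ => p.2 * ctalS (κ p.1) p.2) ν :=
    MemLp.integrable_mul ((memLp_two_iff_integrable_sq (by fun_prop)).2 hx2)
      ((memLp_two_iff_integrable_sq hSm.aestronglyMeasurable).2 hS2i)
  set W : A × ℝ → ℝ := fun p => L p - (p.2 ^ 2 - ctalS (κ p.1) p.2 ^ 2) / 2 with hW
  have hWm : Measurable W := by fun_prop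
  set B : Set (A × ℝ) := {p | 0 < cdf (κ p.1) p.2 ∧ cdf (κ p.1) p.2 < 1} with hB
  have hBm : MeasurableSet B :=
    (measurableSet_lt measurable_const hFm).inter (measurableSet_lt hFm measurable_const)
  have hBae : ∀ᵐ p ∂ν, p ∈ B := by
    rw [hν]
    refine (Measure.ae_compProd_iff (p := fun p => p ∈ B) hBm).2 ?_
    filter_upwards [hac1] with a ha
    filter_upwards [ctal_ae_cdf_pos _ ha, ctal_ae_cdf_lt_one _ ha] with x h0 h1 using ⟨h0, h1⟩
  have hmain : ∫⁻ p, ENNReal.ofReal (Real.exp (-W p)) ∂ν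
      ≤ ENNReal.ofReal (∫ p, p.2 * ctalS (κ p.1) p.2 ∂ν) := by
    have hgm : Measurable (B.indicator fun p : A × ℝ =>
      ENNReal.ofReal (Real.exp ((p.2 ^ 2 - ctalS (κ p.1) p.2 ^ 2) / 2))) :=
      Measurable.indicator (by fun_prop) hBm
    calc ∫⁻ p, ENNReal.ofReal (Real.exp (-W p)) ∂ν
        = ∫⁻ p, B.indicator (fun p : A × ℝ =>
            ENNReal.ofReal (Real.exp ((p.2 ^ 2 - ctalS (κ p.1) p.2 ^ 2) / 2))) p
            * ENNReal.ofReal (Real.exp (-L p)) ∂ν := by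
          apply lintegral_congr_ae
          filter_upwards [hBae] with p hp
          rw [Set.indicator_of_mem hp, ← ENNReal.ofReal_mul (Real.exp_pos _).le, ← Real.exp_add]
          congr 2
          simp only [hW]; ring
      _ ≤ ∫⁻ p, B.indicator (fun p : A × ℝ =>
            ENNReal.ofReal (Real.exp ((p.2 ^ 2 - ctalS (κ p.1) p.2 ^ 2) / 2))) p ∂η :=
          ctal_gibbs ν η hac hgm
      _ = ∫⁻ a, ∫⁻ x, B.indicator (fun p : A × ℝ =>
            ENNReal.ofReal (Real.exp ((p.2 ^ 2 - ctalS (κ p.1) p.2 ^ 2) / 2))) (a, x)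
            ∂(gaussianReal 0 1) ∂ν₁ := by
          rw [hη, Measure.lintegral_compProd hgm]
          simp
      _ ≤ ∫⁻ a, ENNReal.ofReal (∫ x, x * ctalS (κ a) x ∂(κ a)) ∂ν₁ := by
          apply lintegral_mono_ae
          filter_upwards [hac1, hx2a] with a ha ha2
          refine le_trans (le_of_eq ?_) (ctal_key (κ a) ha ha2).2
          have hg' : Measurable (fun x => B.indicator (fun p : A × ℝ =>
            ENNReal.ofReal (Real.exp ((p.2 ^ 2 - ctalS (κ p.1) p.2 ^ 2) / 2))) (a, x)) :=
            hgm.comp measurable_prodMk_left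
          rw [ctal_gauss_lintegral hg']
          have hms : MeasurableSet {x | 0 < cdf (κ a) x ∧ cdf (κ a) x < 1} :=
            (measurableSet_lt measurable_const (monotone_cdf _).measurable).inter
              (measurableSet_lt (monotone_cdf _).measurable measurable_const)
          rw [← lintegral_indicator hms]
          refine lintegral_congr fun x => ?_
          by_cases hx : 0 < cdf (κ a) x ∧ cdf (κ a) x < 1
          · rw [Set.indicator_of_mem (show (a, x) ∈ B from hx), Set.indicator_of_mem
              (show x ∈ {x | 0 < cdf (κ a) x ∧ cdf (κ a) x < 1} from hx),
              ← ENNReal.ofReal_mul (gaussianPDFReal_nonneg _ _ _), gaussianPDFReal,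
              gaussianPDFReal, mul_assoc, ← Real.exp_add]
            congr 3
            simp
            ring
          · rw [Set.indicator_of_notMem (show (a, x) ∉ B from hx), Set.indicator_of_notMem
              (show x ∉ {x | 0 < cdf (κ a) x ∧ cdf (κ a) x < 1} from hx), mul_zero]
      _ = ENNReal.ofReal (∫ p, p.2 * ctalS (κ p.1) p.2 ∂ν) := by
          rw [hν, Measure.integral_compProd hxS, ofReal_integral_eq_lintegral_ofReal]
          · exact Integrable.integral_compProd (κ := Kernel.const Unit ν₁)
              (η := Kernel.prodMkLeft Unit κ) (a := ()) hxS
          · filter_upwards [hac1, hx2a] with a ha ha2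
            exact (ctal_key (κ a) ha ha2).1
  have hxS0 : 0 ≤ ∫ p, p.2 * ctalS (κ p.1) p.2 ∂ν := by
    rw [hν, Measure.integral_compProd hxS]
    apply integral_nonneg_of_ae
    filter_upwards [hac1, hx2a] with a ha ha2
    exact (ctal_key (κ a) ha ha2).1
  have hWe : Integrable (fun p => Real.exp (-W p)) ν := by
    refine ⟨by fun_prop, ?_⟩
    rw [hasFiniteIntegral_iff_ofReal (Filter.Eventually.of_forall fun _ => (Real.exp_pos _).le)]
    exact hmain.trans_lt ENNReal.ofReal_lt_top
  have hWe2 : ∫ p, Real.exp (-W p) ∂ν ≤ ∫ p, p.2 * ctalS (κ p.1) p.2 ∂ν := by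
    rw [← ofReal_integral_eq_lintegral_ofReal hWe
      (Filter.Eventually.of_forall fun _ => (Real.exp_pos _).le),
      ENNReal.ofReal_le_ofReal_iff hxS0] at hmain
    exact hmain
  have hWi : Integrable W ν := hint.sub ((hx2.sub hS2i).div_const 2)
  have hWI : ∫ p, W p ∂ν = ∫ p, L p ∂ν - ((∫ p, p.2 ^ 2 ∂ν) - 1) / 2 := by
    have hD : Integrable (fun p : A × ℝ => (p.2 ^ 2 - ctalS (κ p.1) p.2 ^ 2) / 2) ν :=
      (hx2.sub hS2i).div_const 2
    simp only [hW]
    rw [integral_sub hint hD, integral_div, integral_sub hx2 hS2i, hS2I]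
  have hle : ∫ p, (1 - Real.exp (-W p)) ∂ν ≤ ∫ p, W p ∂ν := by
    refine integral_mono ((integrable_const _).sub hWe) hWi fun p => ?_
    have := Real.add_one_le_exp (-W p)
    linarith
  rw [integral_sub (integrable_const _) hWe, hWI] at hle
  have hone : ∫ _p : A × ℝ, (1 : ℝ) ∂ν = 1 := by simp
  rw [hone] at hle
  have hdi : Integrable (fun p : A × ℝ => (p.2 - ctalS (κ p.1) p.2) ^ 2) ν := by
    have := (hx2.sub (hxS.const_mul 2)).add hS2i
    refine this.congr (Filter.Eventually.of_forall fun p => ?_)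
    simp only [Pi.add_apply, Pi.sub_apply]; ring
  have hdI : ∫ p, (p.2 - ctalS (κ p.1) p.2) ^ 2 ∂ν
      = (∫ p, p.2 ^ 2 ∂ν) - 2 * (∫ p, p.2 * ctalS (κ p.1) p.2 ∂ν) + 1 := by
    have hD2 : Integrable (fun p : A × ℝ => p.2 ^ 2 - 2 * (p.2 * ctalS (κ p.1) p.2)) ν :=
      hx2.sub (hxS.const_mul 2)
    rw [← hS2I, ← integral_const_mul, ← integral_sub hx2 (hxS.const_mul 2),
      ← integral_add hD2 hS2i]
    refine integral_congr_ae (Filter.Eventually.of_forall fun p => ?_)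
    simp only []; ring
  rw [← ofReal_integral_eq_lintegral_ofReal hdi (Filter.Eventually.of_forall fun _ => sq_nonneg _)]
  apply ENNReal.ofReal_le_ofReal
  rw [hdI]
  linarith

end cond

/-! ### Triangular transport in several dimensions -/

lemma ctal_map_prod {A : Type*} [MeasurableSpace A] (ν₁ γ₁ : Measure A) [IsProbabilityMeasure ν₁]
    [IsProbabilityMeasure γ₁] (κ : Kernel A ℝ) [IsMarkovKernel κ] {S₁ : A → A}
    (hS₁ : Measurable S₁) (hmap₁ : ν₁.map S₁ = γ₁)
    (hmap : ∀ᵐ a ∂ν₁, (κ a).map (ctalS (κ a)) = gaussianReal 0 1) :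
    (ν₁ ⊗ₘ κ).map (fun p : A × ℝ => (S₁ p.1, ctalS (κ p.1) p.2))
      = γ₁.prod (gaussianReal 0 1) := by
  have hF : Measurable (fun p : A × ℝ => (S₁ p.1, ctalS (κ p.1) p.2)) :=
    (hS₁.comp measurable_fst).prodMk (ctal_S_kernel_measurable κ)
  symm
  apply Measure.prod_eq
  intro s t hs ht
  rw [Measure.map_apply hF (hs.prod ht), Measure.compProd_apply (hF (hs.prod ht)), ← hmap₁,
    Measure.map_apply hS₁ hs]
  calc _ = ∫⁻ a, (S₁ ⁻¹' s).indicator (fun _ => gaussianReal 0 1 t) a ∂ν₁ := by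
        apply lintegral_congr_ae
        filter_upwards [hmap] with a ha
        have hm : Measurable (ctalS (κ a)) := ctalS_measurable _
        by_cases has : S₁ a ∈ s
        · rw [Set.indicator_of_mem (show a ∈ S₁ ⁻¹' s from has), ← ha, Measure.map_apply hm ht]
          congr 1
          ext x
          simp [has]
        · rw [Set.indicator_of_notMem (show a ∉ S₁ ⁻¹' s from has)]
          convert measure_empty (μ := κ a)
          ext x
          simp [has]
    _ = _ := by
        rw [lintegral_indicator (hS₁ hs), setLIntegral_const, mul_comm]

lemma ctal_kl_toReal {α : Type*} [MeasurableSpace α] (μ ν : Measure α) [IsProbabilityMeasure μ]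
    [IsProbabilityMeasure ν] (h1 : μ ≪ ν) (h2 : Integrable (llr μ ν) μ) :
    InformationTheory.klDiv μ ν = ENNReal.ofReal (∫ x, llr μ ν x ∂μ) := by
  rw [InformationTheory.klDiv_of_ac_of_integrable h1 h2]
  simp

theorem ctal_transport (n : ℕ) : ∀ (ν : Measure (Fin n → ℝ)) [IsProbabilityMeasure ν],
    InformationTheory.klDiv ν (Measure.pi fun _ : Fin n => gaussianReal 0 1) ≠ ⊤ →
    ∃ S : (Fin n → ℝ) → (Fin n → ℝ), Measurable S ∧
      ν.map S = (Measure.pi fun _ : Fin n => gaussianReal 0 1) ∧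
      ∫⁻ x, ∑ i, ENNReal.ofReal ((x i - S x i) ^ 2) ∂ν
        ≤ 2 * InformationTheory.klDiv ν (Measure.pi fun _ : Fin n => gaussianReal 0 1) := by
  induction n with
  | zero =>
    intro ν hν hkl
    refine ⟨id, measurable_id, ?_, by simp⟩
    rw [Measure.map_id]
    ext s hs
    rcases Set.eq_empty_or_nonempty s with h | ⟨x, hx⟩
    · simp [h]
    · have : s = Set.univ := by
        ext y; simp [Subsingleton.elim y x, hx]
      simp [this]
  | succ n ih =>
    intro ν hν hkl
    set γ : Measure ℝ := gaussianReal 0 1 with hγ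
    set E : (Fin (n + 1) → ℝ) → (Fin n → ℝ) × ℝ := fun x => (fun j => x j.succ, x 0) with hE
    have hEm : Measurable E := by fun_prop
    have hpE : (Measure.pi fun _ : Fin (n + 1) => γ).map E
        = (Measure.pi fun _ : Fin n => γ).prod γ := by
      have h1 := (measurePreserving_piFinSuccAbove (fun _ : Fin (n + 1) => γ) 0).map_eq
      rw [← Measure.prod_swap, ← h1, Measure.map_map measurable_swap
        (MeasurableEquiv.measurable _)]
      rfl
    set T : (Fin n → ℝ) × ℝ → (Fin (n + 1) → ℝ) := fun p => Fin.cons p.2 p.1 with hT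
    have hTm : Measurable T := by
      refine measurable_pi_iff.2 fun i => ?_
      refine Fin.cases ?_ (fun j => ?_) i
      · simpa [hT] using measurable_snd
      · simp only [hT, Fin.cons_succ]; fun_prop
    have hTE : ∀ x, T (E x) = x := fun x => by
      ext i
      refine Fin.cases ?_ (fun j => ?_) i <;> simp [hT, hE]
    have hpT : ((Measure.pi fun _ : Fin n => γ).prod γ).map T
        = (Measure.pi fun _ : Fin (n + 1) => γ) := by
      rw [← hpE, Measure.map_map hTm hEm]
      have : T ∘ E = id := funext hTE
      rw [this, Measure.map_id]
    set ρ := ν.map E with hρ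
    have : IsProbabilityMeasure ρ := Measure.isProbabilityMeasure_map hEm.aemeasurable
    have hle : InformationTheory.klDiv ρ ((Measure.pi fun _ : Fin n => γ).prod γ)
        ≤ InformationTheory.klDiv ν (Measure.pi fun _ : Fin (n + 1) => γ) := by
      rw [← hpE]
      exact InformationTheory.klDiv_map_le _ _ hEm
    obtain ⟨κ, hκ, hdis⟩ : ∃ κ : Kernel (Fin n → ℝ) ℝ, IsMarkovKernel κ ∧ ρ.fst ⊗ₘ κ = ρ :=
      ⟨ρ.condKernel, inferInstance, ρ.disintegrate ρ.condKernel⟩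
    have hchain : InformationTheory.klDiv ρ ((Measure.pi fun _ : Fin n => γ).prod γ)
        = InformationTheory.klDiv ρ.fst (Measure.pi fun _ : Fin n => γ)
          + InformationTheory.klDiv (ρ.fst ⊗ₘ κ)
              (ρ.fst ⊗ₘ Kernel.const (Fin n → ℝ) γ) := by
      rw [← InformationTheory.klDiv_compProd_eq_add, hdis, Measure.compProd_const]
    have hne := ne_top_of_le_ne_top hkl hle
    rw [hchain] at hne hle
    obtain ⟨hne1, hne2⟩ := ENNReal.add_ne_top.1 hne
    obtain ⟨S₁, hS₁m, hS₁map, hS₁c⟩ := ih ρ.fst hne1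
    obtain ⟨hac, hint⟩ := InformationTheory.klDiv_ne_top_iff.1 hne2
    obtain ⟨hmap, hcost⟩ := ctal_cond ρ.fst κ hac hint
    have hFmap := ctal_map_prod ρ.fst _ κ hS₁m hS₁map hmap
    set F : (Fin n → ℝ) × ℝ → (Fin n → ℝ) × ℝ :=
      fun p => (S₁ p.1, ctalS (κ p.1) p.2) with hF
    have hcm := ctal_S_kernel_measurable κ
    have hFm : Measurable F := (hS₁m.comp measurable_fst).prodMk hcm
    refine ⟨fun x => T (F (E x)), hTm.comp (hFm.comp hEm), ?_, ?_⟩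
    · rw [hdis] at hFmap
      rw [← hpT, ← hFmap, hρ, Measure.map_map hFm hEm, Measure.map_map hTm (hFm.comp hEm)]
      rfl
    · have hm1 : Measurable (fun a : Fin n → ℝ => ∑ i, ENNReal.ofReal ((a i - S₁ a i) ^ 2)) := by
        refine Finset.measurable_sum _ fun i _ => ?_
        have : Measurable (fun a => S₁ a i) := (measurable_pi_apply i).comp hS₁m
        fun_prop
      have hm2 : Measurable (fun p : (Fin n → ℝ) × ℝ =>
          ENNReal.ofReal ((p.2 - ctalS (κ p.1) p.2) ^ 2)) := by fun_prop
      calc ∫⁻ x, ∑ i, ENNReal.ofReal ((x i - T (F (E x)) i) ^ 2) ∂ν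
          = ∫⁻ x, (fun p : (Fin n → ℝ) × ℝ =>
              ENNReal.ofReal ((p.2 - ctalS (κ p.1) p.2) ^ 2)
              + ∑ i, ENNReal.ofReal ((p.1 i - S₁ p.1 i) ^ 2)) (E x) ∂ν := by
            refine lintegral_congr fun x => ?_
            rw [Fin.sum_univ_succ]
            simp [hT, hF, hE]
        _ = ∫⁻ p, ENNReal.ofReal ((p.2 - ctalS (κ p.1) p.2) ^ 2)
              + ∑ i, ENNReal.ofReal ((p.1 i - S₁ p.1 i) ^ 2) ∂ρ := by
            exact (lintegral_map (hm2.add (hm1.comp measurable_fst)) hEm).symm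
        _ = ∫⁻ p, ENNReal.ofReal ((p.2 - ctalS (κ p.1) p.2) ^ 2) ∂ρ
              + ∫⁻ a, ∑ i, ENNReal.ofReal ((a i - S₁ a i) ^ 2) ∂ρ.fst := by
            rw [lintegral_add_left hm2, Measure.fst, lintegral_map hm1 measurable_fst]
        _ ≤ 2 * InformationTheory.klDiv (ρ.fst ⊗ₘ κ)
              (ρ.fst ⊗ₘ Kernel.const (Fin n → ℝ) γ)
            + 2 * InformationTheory.klDiv ρ.fst (Measure.pi fun _ : Fin n => γ) := by
            refine add_le_add ?_ hS₁c
            rw [ctal_kl_toReal _ _ hac hint]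
            conv_lhs => rw [← hdis]
            refine hcost.trans (le_of_eq ?_)
            rw [ENNReal.ofReal_mul (by norm_num), ENNReal.ofReal_ofNat]
        _ ≤ _ := by
            rw [← mul_add, add_comm]
            gcongr

/-! ### Assembling the result -/

lemma ctal_gaussE (n : ℕ) (s : ℝ) :
    gaussianE n s = (Measure.pi fun _ : Fin n => gaussianReal 0 1).map
      (fun z => WithLp.toLp 2 (fun i => s * z i) : (Fin n → ℝ) → EuclideanSpace ℝ (Fin n)) := by
  have h1 : (gaussianReal 0 1).map (fun x => s * x) = gaussianReal 0 (s ^ 2).toNNReal := by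
    rw [gaussianReal_map_const_mul, mul_zero, mul_one]
    congr 1
    ext
    simp [sq_nonneg]
  have h2 : (Measure.pi fun _ : Fin n => gaussianReal 0 1).map (fun z i => s * z i)
      = Measure.pi fun _ : Fin n => gaussianReal 0 (s ^ 2).toNNReal := by
    have : ∀ _ : Fin n, SigmaFinite ((gaussianReal 0 1).map (fun x => s * x)) := fun _ => by
      rw [h1]; infer_instance
    rw [Measure.pi_map_pi (f := fun _ x => s * x) (fun _ => by fun_prop)]
    simp_rw [h1]
  rw [gaussianE, ← h2, Measure.map_map (MeasurableEquiv.measurable _) (by fun_prop)]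
  rfl

instance ctal_gaussE_prob (n : ℕ) (s : ℝ) : IsProbabilityMeasure (gaussianE n s) := by
  rw [gaussianE]
  exact Measure.isProbabilityMeasure_map (MeasurableEquiv.measurable _).aemeasurable

lemma ctal_norm_sq {n : ℕ} (z : Fin n → ℝ) :
    ENNReal.ofReal (‖(WithLp.toLp 2 z : EuclideanSpace ℝ (Fin n))‖ ^ 2)
      = ∑ i, ENNReal.ofReal (z i ^ 2) := by
  rw [EuclideanSpace.real_norm_sq_eq, ENNReal.ofReal_sum_of_nonneg fun _ _ => sq_nonneg _]

lemma ctal_gauss_sq : ∫⁻ x, ENNReal.ofReal (x ^ 2) ∂(gaussianReal 0 1) = 1 := by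
  have hm : MemLp id 2 (gaussianReal 0 1) := memLp_id_gaussianReal 2
  have hv := variance_eq_sub hm
  rw [variance_id_gaussianReal] at hv
  have hi : Integrable (fun x : ℝ => x ^ 2) (gaussianReal 0 1) := hm.integrable_sq
  rw [← ofReal_integral_eq_lintegral_ofReal hi (Filter.Eventually.of_forall fun _ => sq_nonneg _)]
  have : ∫ x, x ^ 2 ∂(gaussianReal 0 1) = 1 := by
    simpa using hv.symm
  rw [this, ENNReal.ofReal_one]

lemma ctal_gauss_norm_sq (n : ℕ) :
    ∫⁻ z, ENNReal.ofReal (‖(WithLp.toLp 2 z : EuclideanSpace ℝ (Fin n))‖ ^ 2)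
      ∂(Measure.pi fun _ : Fin n => gaussianReal 0 1) = n := by
  simp_rw [ctal_norm_sq]
  rw [lintegral_finsetSum _ (fun i _ => by fun_prop)]
  have : ∀ i : Fin n, ∫⁻ z : Fin n → ℝ, ENNReal.ofReal (z i ^ 2)
      ∂(Measure.pi fun _ : Fin n => gaussianReal 0 1) = 1 := fun i => by
    rw [← ctal_gauss_sq]
    exact (measurePreserving_eval (fun _ : Fin n => gaussianReal 0 1) i).lintegral_comp
      (f := fun x => ENNReal.ofReal (x ^ 2)) (by fun_prop)
  simp [this]

lemma ctal_mink {α : Type*} [MeasurableSpace α] (μ : Measure α) {f g h : α → ℝ}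
    (hf : Measurable f) (hg : Measurable g) (hf0 : ∀ x, 0 ≤ f x) (hg0 : ∀ x, 0 ≤ g x)
    (hh0 : ∀ x, 0 ≤ h x) (hh : ∀ x, h x ≤ f x + g x) {a b : ℝ} (ha : 0 ≤ a) (hb : 0 ≤ b)
    (hfa : ∫⁻ x, ENNReal.ofReal (f x ^ 2) ∂μ ≤ ENNReal.ofReal (a ^ 2))
    (hgb : ∫⁻ x, ENNReal.ofReal (g x ^ 2) ∂μ ≤ ENNReal.ofReal (b ^ 2)) :
    ∫⁻ x, ENNReal.ofReal (h x ^ 2) ∂μ ≤ ENNReal.ofReal ((a + b) ^ 2) := by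
  have key : ∀ (u : α → ℝ) (c : ℝ), (∀ x, 0 ≤ u x) → 0 ≤ c →
      ((∫⁻ x, ENNReal.ofReal (u x ^ 2) ∂μ ≤ ENNReal.ofReal (c ^ 2)) ↔
      (∫⁻ x, ENNReal.ofReal (u x) ^ (2 : ℝ) ∂μ) ^ (1 / 2 : ℝ) ≤ ENNReal.ofReal c) := by
    intro u c hu hc
    have h1 : ∀ x, ENNReal.ofReal (u x ^ 2) = ENNReal.ofReal (u x) ^ (2 : ℝ) := fun x => by
      rw [ENNReal.ofReal_pow (hu x)]; norm_cast
    simp_rw [h1]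
    rw [one_div, ENNReal.rpow_inv_le_iff (by norm_num), ENNReal.ofReal_pow hc]
    norm_cast
  rw [key f a hf0 ha] at hfa
  rw [key g b hg0 hb] at hgb
  rw [key h (a + b) hh0 (add_nonneg ha hb)]
  calc (∫⁻ x, ENNReal.ofReal (h x) ^ (2 : ℝ) ∂μ) ^ (1 / 2 : ℝ)
      ≤ (∫⁻ x, ((fun x => ENNReal.ofReal (f x)) + fun x => ENNReal.ofReal (g x)) x ^ (2 : ℝ) ∂μ)
          ^ (1 / 2 : ℝ) := by
        gcongr with x
        rw [Pi.add_apply, ← ENNReal.ofReal_add (hf0 x) (hg0 x)]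
        exact ENNReal.ofReal_le_ofReal (hh x)
    _ ≤ _ := ENNReal.lintegral_Lp_add_le (by fun_prop) (by fun_prop) (by norm_num)
    _ ≤ ENNReal.ofReal a + ENNReal.ofReal b := add_le_add hfa hgb
    _ = ENNReal.ofReal (a + b) := (ENNReal.ofReal_add ha hb).symm

lemma ctal_gauss_scaled (n : ℕ) {s : ℝ} (hs : 0 ≤ s) :
    ∫⁻ z, ENNReal.ofReal ((s * ‖(WithLp.toLp 2 z : EuclideanSpace ℝ (Fin n))‖) ^ 2)
      ∂(Measure.pi fun _ : Fin n => gaussianReal 0 1) = ENNReal.ofReal ((√n * s) ^ 2) := by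
  simp_rw [mul_pow, ENNReal.ofReal_mul (sq_nonneg s)]
  rw [lintegral_const_mul _ (by fun_prop), ctal_gauss_norm_sq, Real.sq_sqrt (by positivity),
    ENNReal.ofReal_mul (by positivity), mul_comm, ENNReal.ofReal_natCast]

/-- Wasserstein triangle inequality combined with Talagrand's
transportation inequality: there is a coupling of `N(0, σ²Iₙ)` and `ν` whose quadratic
transport cost is at most `(√n (σ - τ) + √(2σ² KL(ν‖γ_τ)))²`. -/
theorem coupling_gaussian_talagrand
    (n : ℕ) (hn : 1 ≤ n) (σ τ : ℝ) (hσ : 0 < σ) (hτ0 : 0 ≤ τ) (hτσ : τ ≤ σ)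
    (ν : Measure (EuclideanSpace ℝ (Fin n))) (hν : IsProbabilityMeasure ν)
    (hKL : klDiv ν (gaussianE n τ) ≠ ⊤) :
    ∃ π : Measure (EuclideanSpace ℝ (Fin n) × EuclideanSpace ℝ (Fin n)),
      IsProbabilityMeasure π ∧
      π.map Prod.fst = gaussianE n σ ∧ π.map Prod.snd = ν ∧
      (∫⁻ p, ENNReal.ofReal (‖p.1 - p.2‖ ^ 2) ∂π)
        ≤ ENNReal.ofReal ((Real.sqrt n * (σ - τ)
            + Real.sqrt (2 * σ ^ 2 * (klDiv ν (gaussianE n τ)).toReal)) ^ 2) := by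
  have hab : ν ≪ gaussianE n τ ∧ Integrable (llr ν (gaussianE n τ)) ν := by
    by_contra hcon
    exact hKL (if_neg hcon)
  have hkl_eq : klDiv ν (gaussianE n τ) = InformationTheory.klDiv ν (gaussianE n τ) := by
    rw [ctal_kl_toReal _ _ hab.1 hab.2]
    exact if_pos hab
  rw [hkl_eq] at hKL ⊢
  set γn := (Measure.pi fun _ : Fin n => gaussianReal 0 1) with hγn
  have hscm : ∀ s : ℝ, Measurable
      (fun z => WithLp.toLp 2 (fun i => s * z i) : (Fin n → ℝ) → EuclideanSpace ℝ (Fin n)) :=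
    fun s => by fun_prop
  have hsm : ∀ (s : ℝ) (z : Fin n → ℝ),
      (WithLp.toLp 2 (fun i => s * z i) : EuclideanSpace ℝ (Fin n)) = s • WithLp.toLp 2 z :=
    fun s z => rfl
  rcases hτ0.eq_or_lt with h0 | hτ
  · -- degenerate case
    subst h0
    have hd : gaussianE n 0 = Measure.dirac 0 := by
      rw [ctal_gaussE]
      simp only [hsm, zero_smul]
      rw [Measure.map_const]
      simp
    have hνd : Measure.dirac (0 : EuclideanSpace ℝ (Fin n)) = ν := by
      have h1 : ν {0}ᶜ = 0 := by
        apply hab.1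
        rw [hd]
        simp
      have h2 : ∀ᵐ x ∂ν, id x = (fun _ => (0 : EuclideanSpace ℝ (Fin n))) x := by
        rw [ae_iff]; simpa [Set.compl_def] using h1
      have h3 : ν.map id = ν.map (fun _ => (0 : EuclideanSpace ℝ (Fin n))) := Measure.map_congr h2
      rw [Measure.map_id, Measure.map_const] at h3
      rw [h3]
      simp
    have hm : Measurable (fun z => (WithLp.toLp 2 (fun i => σ * z i), 0) :
        (Fin n → ℝ) → EuclideanSpace ℝ (Fin n) × EuclideanSpace ℝ (Fin n)) :=
      (hscm σ).prodMk measurable_const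
    refine ⟨γn.map (fun z => (WithLp.toLp 2 (fun i => σ * z i), 0)),
      Measure.isProbabilityMeasure_map hm.aemeasurable, ?_, ?_, ?_⟩
    · rw [Measure.map_map measurable_fst hm, ctal_gaussE]
      rfl
    · rw [Measure.map_map measurable_snd hm, ← hνd]
      have : (Prod.snd ∘ fun z : Fin n → ℝ => ((WithLp.toLp 2 (fun i => σ * z i) :
          EuclideanSpace ℝ (Fin n)), (0 : EuclideanSpace ℝ (Fin n)))) = fun _ => 0 := rfl
      rw [this, Measure.map_const]
      simp
    · rw [lintegral_map (by fun_prop) hm]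
      calc _ = ∫⁻ z, ENNReal.ofReal ((σ * ‖(WithLp.toLp 2 z : EuclideanSpace ℝ (Fin n))‖) ^ 2)
            ∂γn := by
            refine lintegral_congr fun z => ?_
            simp only [hsm, sub_zero, norm_smul, Real.norm_of_nonneg hσ.le]
        _ = _ := ctal_gauss_scaled n hσ.le
        _ ≤ _ := by
            apply ENNReal.ofReal_le_ofReal
            rw [sub_zero]
            have : 0 ≤ √n * σ := by positivity
            gcongr
            exact le_add_of_nonneg_right (Real.sqrt_nonneg _)
  · set D : EuclideanSpace ℝ (Fin n) → (Fin n → ℝ) := fun x i => x i / τ with hD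
    have hDm : Measurable D := by fun_prop
    have hGD : (gaussianE n τ).map D = γn := by
      rw [ctal_gaussE, Measure.map_map hDm (hscm τ)]
      have : (D ∘ fun z : Fin n → ℝ => (WithLp.toLp 2 (fun i => τ * z i) :
          EuclideanSpace ℝ (Fin n))) = id := by
        ext z i
        simp [hD, hτ.ne']
      rw [this, Measure.map_id]
    have hle : InformationTheory.klDiv (ν.map D) γn
        ≤ InformationTheory.klDiv ν (gaussianE n τ) := by
      rw [← hGD]
      exact InformationTheory.klDiv_map_le _ _ hDm
    have : IsProbabilityMeasure (ν.map D) := Measure.isProbabilityMeasure_map hDm.aemeasurable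
    obtain ⟨S, hSm, hSmap, hScost⟩ := ctal_transport n (ν.map D) (ne_top_of_le_ne_top hKL hle)
    rw [← hγn] at hSmap hScost
    set G : EuclideanSpace ℝ (Fin n) → EuclideanSpace ℝ (Fin n) :=
      fun x => WithLp.toLp 2 (fun i => σ * S (D x) i) with hG
    have hGm : Measurable G := (hscm σ).comp (hSm.comp hDm)
    have hpm : Measurable (fun x => (G x, x)) := hGm.prodMk measurable_id
    refine ⟨ν.map (fun x => (G x, x)), Measure.isProbabilityMeasure_map hpm.aemeasurable,
      ?_, ?_, ?_⟩
    · rw [Measure.map_map measurable_fst hpm, ctal_gaussE, ← hγn, ← hSmap,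
        Measure.map_map hSm hDm, Measure.map_map (hscm σ) (hSm.comp hDm)]
      rfl
    · rw [Measure.map_map measurable_snd hpm]
      exact Measure.map_id
    · rw [lintegral_map (by fun_prop) hpm]
      have hSD : Measurable (fun x => S (D x)) := hSm.comp hDm
      have hm1 : Measurable (fun x =>
          ‖(WithLp.toLp 2 (S (D x)) : EuclideanSpace ℝ (Fin n))‖) := by fun_prop
      have hm2 : Measurable (fun x =>
          ‖(WithLp.toLp 2 (D x - S (D x)) : EuclideanSpace ℝ (Fin n))‖) := by fun_prop
      refine ctal_mink ν
        (f := fun x => (σ - τ) * ‖(WithLp.toLp 2 (S (D x)) : EuclideanSpace ℝ (Fin n))‖)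
        (g := fun x => τ * ‖(WithLp.toLp 2 (D x - S (D x)) : EuclideanSpace ℝ (Fin n))‖)
        (hm1.const_mul _) (hm2.const_mul _)
        (fun x => mul_nonneg (sub_nonneg.2 hτσ) (norm_nonneg _))
        (fun x => mul_nonneg hτ0 (norm_nonneg _)) (fun x => norm_nonneg _) ?_
        (mul_nonneg (Real.sqrt_nonneg _) (sub_nonneg.2 hτσ)) (Real.sqrt_nonneg _) ?_ ?_
      · intro x
        have hx : G x - x = (σ - τ) • (WithLp.toLp 2 (S (D x)) : EuclideanSpace ℝ (Fin n))
            - τ • (WithLp.toLp 2 (D x - S (D x)) : EuclideanSpace ℝ (Fin n)) := by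
          ext i
          simp only [hG, hD, PiLp.sub_apply, PiLp.smul_apply, smul_eq_mul, Pi.sub_apply]
          field_simp
          ring
        simp only [hx]
        refine (norm_sub_le _ _).trans (le_of_eq ?_)
        rw [norm_smul, norm_smul, Real.norm_of_nonneg (sub_nonneg.2 hτσ), Real.norm_of_nonneg hτ0]
      · refine le_of_eq ?_
        rw [← ctal_gauss_scaled n (sub_nonneg.2 hτσ), ← hγn, ← hSmap,
          lintegral_map (by fun_prop) hSm, lintegral_map _ hDm]
        have : Measurable (fun z => ‖(WithLp.toLp 2 (S z) : EuclideanSpace ℝ (Fin n))‖) := by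
          fun_prop
        fun_prop
      · simp only [mul_pow, ENNReal.ofReal_mul (sq_nonneg τ), ctal_norm_sq, Pi.sub_apply]
        have hm3 : Measurable (fun z : Fin n → ℝ => ∑ i, ENNReal.ofReal ((z i - S z i) ^ 2)) := by
          refine Finset.measurable_sum _ fun i _ => ?_
          have : Measurable (fun a => S a i) := (measurable_pi_apply i).comp hSm
          fun_prop
        have hm4 : Measurable (fun x => ∑ i, ENNReal.ofReal ((D x i - S (D x) i) ^ 2)) :=
          hm3.comp hDm
        rw [lintegral_map hm3 hDm] at hScost
        rw [lintegral_const_mul _ hm4, Real.sq_sqrt (by positivity)]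
        calc _ ≤ ENNReal.ofReal (τ ^ 2) * (2 * InformationTheory.klDiv ν (gaussianE n τ)) := by
              refine mul_le_mul_right ?_ _
              refine hScost.trans ?_
              gcongr
          _ ≤ ENNReal.ofReal (σ ^ 2) * (2 * InformationTheory.klDiv ν (gaussianE n τ)) := by
              gcongr
          _ = _ := by
              rw [ENNReal.ofReal_mul (by positivity), ENNReal.ofReal_toReal hKL,
                ENNReal.ofReal_mul (by norm_num), ENNReal.ofReal_ofNat]
              ring
end

section
/- Let γ₀ > 0. For each n ≥ 1 let Sₙ ⊆ ℝⁿ be a bounded Lebesgue-measurable set with uniform probability measure μₙ, whose Lebesgue measure equals (2πe·γ₀²·(1 + εₙ))^{n/2} and whose normalized second moment satisfies (1/n)·∫ ‖u‖² dμₙ(u) = Gₙ · 2πe·γ₀²·(1 + εₙ), where εₙ > −1, εₙ → 0, and Gₙ → 1/(2πe) as n → ∞. Then (1/n)·KL(μₙ ‖ γ_{γ₀}⁽ⁿ⁾) → 0 as n → ∞. -/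
open MeasureTheory ProbabilityTheory Filter
open scoped ENNReal NNReal Topology

lemma pi_gaussian_eq (n : ℕ) (v : ℝ≥0) (hv : v ≠ 0) :
    (Measure.pi fun _ : Fin n => gaussianReal 0 v) =
      (volume : Measure (Fin n → ℝ)).withDensity
        (fun x => ENNReal.ofReal (∏ i, gaussianPDFReal 0 v (x i))) := by
  refine Measure.pi_eq fun s hs => ?_
  rw [withDensity_apply _ (MeasurableSet.univ_pi hs), volume_pi, Measure.restrict_pi_pi,
    ← ofReal_integral_eq_lintegral_ofReal]
  · rw [integral_fintype_prod_eq_prod (𝕜 := ℝ) (f := fun _ x => gaussianPDFReal 0 v x),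
      ENNReal.ofReal_prod_of_nonneg]
    · refine Finset.prod_congr rfl fun i _ => ?_
      rw [gaussianReal_apply_eq_integral 0 hv]
    · intro i _
      exact integral_nonneg fun x => gaussianPDFReal_nonneg _ _ _
  · exact Integrable.fintype_prod (𝕜 := ℝ) (f := fun _ x => gaussianPDFReal 0 v x)
      fun i => (integrable_gaussianPDFReal 0 v).restrict
  · exact ae_of_all _ fun x => Finset.prod_nonneg fun i _ => gaussianPDFReal_nonneg _ _ _

lemma gaussianE_eq (n : ℕ) (σ : ℝ) (hσ : 0 < σ) :
    gaussianE n σ = (volume : Measure (EuclideanSpace ℝ (Fin n))).withDensity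
      (fun x => ENNReal.ofReal (∏ i, gaussianPDFReal 0 (σ ^ 2).toNNReal (x i))) := by
  have hv : (σ ^ 2).toNNReal ≠ 0 := by
    have : 0 < σ ^ 2 := by positivity
    simpa using hσ.ne'
  have hm : Measurable (MeasurableEquiv.toLp 2 (Fin n → ℝ)) := MeasurableEquiv.measurable _
  have hd : Measurable (fun x : EuclideanSpace ℝ (Fin n) =>
      ENNReal.ofReal (∏ i, gaussianPDFReal 0 (σ ^ 2).toNNReal (x i))) := by
    refine Measurable.ennreal_ofReal (Finset.measurable_prod _ fun i _ => ?_)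
    exact (measurable_gaussianPDFReal _ _).comp (by fun_prop)
  unfold gaussianE
  rw [pi_gaussian_eq n _ hv]
  ext s hs
  rw [Measure.map_apply hm hs, withDensity_apply _ (hm hs), withDensity_apply _ hs]
  exact (PiLp.volume_preserving_toLp (Fin n)).setLIntegral_comp_preimage hs hd

lemma log_density (n : ℕ) (σ : ℝ) (hσ : 0 < σ) (x : EuclideanSpace ℝ (Fin n)) :
    Real.log (∏ i, gaussianPDFReal 0 (σ ^ 2).toNNReal (x i)) =
      -((n : ℝ) / 2 * Real.log (2 * Real.pi * σ ^ 2)) - (1 / (2 * σ ^ 2)) * ‖x‖ ^ 2 := by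
  have hv : (σ ^ 2).toNNReal ≠ 0 := by
    have : 0 < σ ^ 2 := by positivity
    simpa using hσ.ne'
  have hpi := Real.pi_pos
  rw [Real.log_prod (fun i _ => (gaussianPDFReal_pos 0 _ _ hv).ne')]
  have : ∀ i, Real.log (gaussianPDFReal 0 (σ ^ 2).toNNReal (x i)) =
      -(1 / 2 * Real.log (2 * Real.pi * σ ^ 2)) - (1 / (2 * σ ^ 2)) * ‖x i‖ ^ 2 := by
    intro i
    rw [gaussianPDFReal, Real.coe_toNNReal _ (sq_nonneg σ), Real.log_mul (by positivity)
      (by positivity), Real.log_exp, Real.log_inv, Real.log_sqrt (by positivity)]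
    simp only [Real.norm_eq_abs, sq_abs]
    ring
  simp_rw [this]
  rw [EuclideanSpace.norm_sq_eq, Finset.sum_sub_distrib, ← Finset.mul_sum]
  simp
  ring

lemma kl_formula (n : ℕ) (σ : ℝ) (hσ : 0 < σ) (S : Set (EuclideanSpace ℝ (Fin n)))
    (hb : Bornology.IsBounded S) (hS : MeasurableSet S) (V : ℝ) (hV : 0 < V)
    (hvol : volume S = ENNReal.ofReal V) :
    klDiv ((volume S)⁻¹ • (volume.restrict S)) (gaussianE n σ) =
      ENNReal.ofReal (-Real.log V + (n : ℝ) / 2 * Real.log (2 * Real.pi * σ ^ 2) +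
        (1 / (2 * σ ^ 2)) * ∫ u, ‖u‖ ^ 2 ∂((volume S)⁻¹ • (volume.restrict S))) := by
  have hv : (σ ^ 2).toNNReal ≠ 0 := by
    have : 0 < σ ^ 2 := by positivity
    simpa using hσ.ne'
  have hS0 : volume S ≠ 0 := by rw [hvol]; simpa using hV
  have hSt : volume S ≠ ∞ := by rw [hvol]; simp
  have hc : (volume S)⁻¹ ≠ ∞ := by simpa using hS0
  have : IsFiniteMeasure ((volume : Measure (EuclideanSpace ℝ (Fin n))).restrict S) :=
    ⟨by simpa using hSt.lt_top⟩
  set μ := (volume S)⁻¹ • ((volume : Measure (EuclideanSpace ℝ (Fin n))).restrict S) with hμ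
  have hprob : IsProbabilityMeasure μ :=
    ⟨by simp [hμ, ENNReal.inv_mul_cancel hS0 hSt]⟩
  have hμv : μ ≪ volume := Measure.restrict_le_self.absolutelyContinuous.smul_left _
  have hd : Measurable (fun x : EuclideanSpace ℝ (Fin n) =>
      ENNReal.ofReal (∏ i, gaussianPDFReal 0 (σ ^ 2).toNNReal (x i))) := by
    refine Measurable.ennreal_ofReal (Finset.measurable_prod _ fun i _ => ?_)
    exact (measurable_gaussianPDFReal _ _).comp (by fun_prop)
  have hpos : ∀ x : EuclideanSpace ℝ (Fin n),
      0 < ∏ i, gaussianPDFReal 0 (σ ^ 2).toNNReal (x i) :=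
    fun x => Finset.prod_pos fun i _ => gaussianPDFReal_pos 0 _ _ hv
  have hne0 : ∀ x : EuclideanSpace ℝ (Fin n),
      ENNReal.ofReal (∏ i, gaussianPDFReal 0 (σ ^ 2).toNNReal (x i)) ≠ 0 :=
    fun x => by simpa using hpos x
  have hac : μ ≪ gaussianE n σ := by
    rw [gaussianE_eq n σ hσ]
    exact hμv.trans (withDensity_absolutelyContinuous' hd.aemeasurable (ae_of_all _ hne0))
  have hSae : ∀ᵐ x ∂μ, x ∈ S := Measure.ae_smul_measure (ae_restrict_mem hS) _
  have h1 := Measure.rnDeriv_withDensity_right μ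
    (volume : Measure (EuclideanSpace ℝ (Fin n))) hd.aemeasurable
    (ae_of_all _ hne0) (ae_of_all _ fun x => ENNReal.ofReal_ne_top)
  have h2 : μ.rnDeriv volume =ᵐ[volume] _ := Measure.rnDeriv_smul_left_of_ne_top
    ((volume : Measure (EuclideanSpace ℝ (Fin n))).restrict S) volume hc
  have h3 := Measure.rnDeriv_restrict_self (volume : Measure (EuclideanSpace ℝ (Fin n))) hS
  have hllr : llr μ (gaussianE n σ) =ᵐ[μ] fun x =>
      (-Real.log V + (n : ℝ) / 2 * Real.log (2 * Real.pi * σ ^ 2)) +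
        (1 / (2 * σ ^ 2)) * ‖x‖ ^ 2 := by
    filter_upwards [hSae, hμv.ae_le h1, hμv.ae_le h2, hμv.ae_le h3] with x hx e1 e2 e3
    rw [llr_def]
    simp only
    rw [gaussianE_eq n σ hσ, e1, e2]
    simp only [Pi.smul_apply, e3, Set.indicator_of_mem hx, smul_eq_mul, Pi.one_apply, mul_one]
    rw [ENNReal.toReal_mul, ENNReal.toReal_inv, ENNReal.toReal_inv, hvol,
      ENNReal.toReal_ofReal (hpos x).le, ENNReal.toReal_ofReal hV.le,
      Real.log_mul (inv_ne_zero (hpos x).ne') (inv_ne_zero hV.ne'), Real.log_inv, Real.log_inv,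
      log_density n σ hσ x]
    ring
  have hint : Integrable (fun x : EuclideanSpace ℝ (Fin n) => ‖x‖ ^ 2) μ := by
    obtain ⟨C, hC⟩ := hb.exists_norm_le
    refine Integrable.of_bound (by fun_prop) (C ^ 2) ?_
    filter_upwards [hSae] with x hx
    rw [Real.norm_of_nonneg (by positivity)]
    exact pow_le_pow_left₀ (norm_nonneg _) (hC x hx) 2
  have hint2 : Integrable (llr μ (gaussianE n σ)) μ :=
    ((integrable_const _).add (hint.const_mul _)).congr hllr.symm
  rw [klDiv, if_pos ⟨hac, hint2⟩, integral_congr_ae hllr,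
    integral_add (integrable_const _) (hint.const_mul _), integral_const_mul]
  simp

/-- For a quantization-good (sphere-bound-achieving) sequence of cells,
the uniform dither becomes Gaussian-like: the normalized KL divergence of the uniform
distribution on the cell from `N(0, γ₀²Iₙ)` tends to `0`. -/
theorem klDiv_uniform_gaussian_tendsto_zero
    (γ₀ : ℝ) (hγ₀ : 0 < γ₀)
    (S : (n : ℕ) → Set (EuclideanSpace ℝ (Fin n)))
    (μ : (n : ℕ) → Measure (EuclideanSpace ℝ (Fin n)))
    (ε G : ℕ → ℝ)
    (hbdd : ∀ n, 1 ≤ n → Bornology.IsBounded (S n))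
    (hmeas : ∀ n, 1 ≤ n → MeasurableSet (S n))
    (hμ : ∀ n, 1 ≤ n → μ n = (volume (S n))⁻¹ • (volume.restrict (S n)))
    (hvol : ∀ n, 1 ≤ n → volume (S n)
      = ENNReal.ofReal ((2 * Real.pi * Real.exp 1 * γ₀ ^ 2 * (1 + ε n)) ^ ((n : ℝ) / 2)))
    (hsm : ∀ n : ℕ, 1 ≤ n → (1 / (n : ℝ)) * (∫ u, ‖u‖ ^ 2 ∂(μ n))
      = G n * (2 * Real.pi * Real.exp 1 * γ₀ ^ 2 * (1 + ε n)))
    (hε : ∀ n, 1 ≤ n → -1 < ε n)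
    (hεlim : Tendsto ε atTop (𝓝 0))
    (hGlim : Tendsto G atTop (𝓝 (1 / (2 * Real.pi * Real.exp 1)))) :
    Tendsto (fun n => klDiv (μ n) (gaussianE n γ₀) / (n : ℝ≥0∞)) atTop
      (𝓝 (0 : ℝ≥0∞)) := by
  have hpi := Real.pi_pos
  have he := Real.exp_pos 1
  have key : ∀ n : ℕ, 1 ≤ n → klDiv (μ n) (gaussianE n γ₀) / (n : ℝ≥0∞) =
      ENNReal.ofReal (-(1 / 2) - 1 / 2 * Real.log (1 + ε n)
        + G n * (Real.pi * Real.exp 1 * (1 + ε n))) := by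
    intro n hn
    have hn0 : (0 : ℝ) < n := by exact_mod_cast hn
    have h1e : 0 < 1 + ε n := by linarith [hε n hn]
    have hB : 0 < 2 * Real.pi * Real.exp 1 * γ₀ ^ 2 * (1 + ε n) := by positivity
    have hint : ∫ u, ‖u‖ ^ 2 ∂(μ n) =
        n * (G n * (2 * Real.pi * Real.exp 1 * γ₀ ^ 2 * (1 + ε n))) := by
      rw [← hsm n hn]; field_simp
    have hk := kl_formula n γ₀ hγ₀ (S n) (hbdd n hn) (hmeas n hn) _
      (Real.rpow_pos_of_pos hB _) (hvol n hn)
    rw [← hμ n hn, hint, Real.log_rpow hB] at hk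
    have hlog : Real.log (2 * Real.pi * Real.exp 1 * γ₀ ^ 2 * (1 + ε n)) =
        Real.log (2 * Real.pi * γ₀ ^ 2) + 1 + Real.log (1 + ε n) := by
      rw [show 2 * Real.pi * Real.exp 1 * γ₀ ^ 2 * (1 + ε n) =
        2 * Real.pi * γ₀ ^ 2 * Real.exp 1 * (1 + ε n) by ring,
        Real.log_mul (by positivity) h1e.ne', Real.log_mul (by positivity) he.ne', Real.log_exp]
    rw [hk, ← ENNReal.ofReal_natCast, ← ENNReal.ofReal_div_of_pos hn0, hlog]
    congr 1
    field_simp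
    ring
  have hlim : Tendsto (fun n => -(1 / 2) - 1 / 2 * Real.log (1 + ε n)
        + G n * (Real.pi * Real.exp 1 * (1 + ε n))) atTop (𝓝 0) := by
    have h1 : Tendsto (fun n => 1 + ε n) atTop (𝓝 1) := by simpa using hεlim.const_add 1
    have h2 := h1.log one_ne_zero
    have h3 := ((h2.const_mul (1 / 2)).const_sub (-(1 / 2))).add
      (hGlim.mul (h1.const_mul (Real.pi * Real.exp 1)))
    convert h3 using 2
    rw [Real.log_one]
    field_simp
    norm_num
  have := ENNReal.tendsto_ofReal hlim
  rw [ENNReal.ofReal_zero] at this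
  refine this.congr' ?_
  filter_upwards [eventually_ge_atTop 1] with n hn using (key n hn).symm
end
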